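/- Let $J_0^{[1]} = \oint \frac{dz}{z} e^{[1]}(z) - 1$ and $J_0^{[-1]}$ its image under $q \mapsto q^{-1}, t \mapsto t^{-1}$, where $e(z) = \exp(\sum_{n\geq 1}\frac{1-t^n}{n}z^{-n}p_n)\exp(-\sum_{n\geq 1}\frac{1-q^{-n}}{n}z^n p_n^\perp)$. Then $[J_0^{[1]}, J_0^{[-1]}] = 0$ as operators on $\Lambda$. -/

import Mathlib

open MvPolynomial

variable {F : Type*} [Field F] [CharZero F]

variable {F : Type*} [Field F] [CharZero F]

/-- Coefficients `Q_n` of `Q(z) = exp(∑_{k≥1} (1-t^k)/k · p_k z^k)` in the ring of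
symmetric functions (modelled as `MvPolynomial ℕ+ F`, the variable `m : ℕ+` being
the power sum `p_m`), via the recursion `(n+1) Q_{n+1} = ∑_{k=1}^{n+1} (1-t^k) p_k Q_{n+1-k}`. -/
noncomputable def Qcoef (t : F) : ℕ → MvPolynomial ℕ+ F
  | 0 => 1
  | n + 1 =>
      MvPolynomial.C (((n : F) + 1)⁻¹) *
        ∑ k ∈ Finset.range (n + 1),
          MvPolynomial.C (1 - t ^ (k + 1)) * MvPolynomial.X k.succPNat *
            Qcoef t (n - k)
  decreasing_by exact Nat.lt_succ_of_le (Nat.sub_le n k)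

/-- The adjoint `p_m^⊥ = m ∂/∂p_m` of multiplication by the power sum `p_m`. -/
noncomputable def pperp (m : ℕ+) : MvPolynomial ℕ+ F →ₗ[F] MvPolynomial ℕ+ F :=
  ((m : ℕ) : F) • (MvPolynomial.pderiv m).toLinearMap

/-- Coefficients `Q*_n` of `Q*(w) = exp(∑_{k≥1} (1-q^k)/k · p_k^⊥ w^k)`, via the
same recursion (the operators `p_k^⊥` commute). -/
noncomputable def QstarOp (q : F) : ℕ → (MvPolynomial ℕ+ F →ₗ[F] MvPolynomial ℕ+ F)
  | 0 => LinearMap.id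
  | n + 1 =>
      (((n : F) + 1)⁻¹) •
        ∑ k ∈ Finset.range (n + 1),
          (1 - q ^ (k + 1)) • ((pperp k.succPNat) ∘ₗ QstarOp q (n - k))
  decreasing_by exact Nat.lt_succ_of_le (Nat.sub_le n k)

/-- Multiplication by a symmetric function, as a linear operator. -/
noncomputable def mulOp (f : MvPolynomial ℕ+ F) :
    MvPolynomial ℕ+ F →ₗ[F] MvPolynomial ℕ+ F :=
  LinearMap.mulLeft F f


/-- The weighted degree of a symmetric function, where the power sum `p_m` has
weight `m` (i.e. the degree in the underlying variables `x_i`). -/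
noncomputable def wdeg (f : MvPolynomial ℕ+ F) : ℕ :=
  MvPolynomial.weightedTotalDegree (fun m : ℕ+ => (m : ℕ)) f

/-- The truncation `∑_{n=0}^{M} q^{-sn} Q_n^{[s]} Q_n^{*[s]}` of the operator
`1 + J₀^{[s]}`; here the parameters are already specialized, so `s = 1`
corresponds to `(q, t)` and `s = -1` to `(q⁻¹, t⁻¹)`. -/
noncomputable def Jop (q t : F) (M : ℕ) : MvPolynomial ℕ+ F →ₗ[F] MvPolynomial ℕ+ F :=
  ∑ n ∈ Finset.range (M + 1),
    (q ^ (-(n : ℤ))) • (mulOp (Qcoef t n) ∘ₗ QstarOp q n)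

/-!
Let `Q(z) = ∑ Q_n z^n` and `Q*(w) = ∑ Q*_n w^n`. Moving `Q*(w)` to the right past `Q(z)` costs the
normal-ordering factor, and the two orders of composing `J₀^{[1]}` and `J₀^{[-1]}` use its
expansions at `0` and at `∞`. Their difference comes from two poles with opposite residues, so with
`x = q / t` its coefficient in degree `m - i` is proportional to `1 - x^{m-i}`: a function of `m`
alone plus `x^m` times a function of `i` alone. The second part contributes
nothing because `Q(z)` for `t` is inverse to `Q(tz)` for `t⁻¹`. The first part factors out of the
normally ordered sum and leaves the adjoint of the same inversion identity, with `q` in place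
of `t`, which vanishes too.
-/

section LogDerivative

open Finset.HasAntidiagonal
open scoped PowerSeries

variable {A B : Type*} [CommRing A] [CommRing B]

/-- `h` is a logarithmic derivative of the power series `f`, written as `f' = h * f` so that `f`
need not be invertible. It plays the role of the paper's `f = exp g`, with `h = g'`. -/
def HasLogDeriv (h f : A⟦X⟧) : Prop :=
  PowerSeries.derivative A f = h * f

namespace HasLogDeriv

variable {h h₁ h₂ f g : A⟦X⟧}

theorem mul (hf : HasLogDeriv h₁ f) (hg : HasLogDeriv h₂ g) :
    HasLogDeriv (h₁ + h₂) (f * g) := by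
  rw [HasLogDeriv] at *
  rw [Derivation.leibniz, hf, hg, smul_eq_mul, smul_eq_mul]
  ring

theorem map (φ : A →+* B) (hf : HasLogDeriv h f) :
    HasLogDeriv (PowerSeries.map φ h) (PowerSeries.map φ f) := by
  rw [HasLogDeriv] at *
  rw [← map_mul, ← hf]
  ext n
  simp [PowerSeries.coeff_derivative]

theorem rescale (a : A) (hf : HasLogDeriv h f) :
    HasLogDeriv (PowerSeries.C a * PowerSeries.rescale a h) (PowerSeries.rescale a f) := by
  rw [HasLogDeriv] at *
  rw [mul_assoc, ← map_mul, ← hf]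
  ext n
  simp only [PowerSeries.coeff_derivative, PowerSeries.coeff_rescale, PowerSeries.coeff_C_mul]
  ring

theorem coeff_succ (hf : HasLogDeriv h f) (n : ℕ) :
    (n + 1) • PowerSeries.coeff (n + 1) f =
      ∑ p ∈ antidiagonal n, PowerSeries.coeff p.1 h * PowerSeries.coeff p.2 f := by
  rw [HasLogDeriv] at hf
  rw [← PowerSeries.coeff_mul, ← hf, PowerSeries.coeff_derivative, nsmul_eq_mul, mul_comm]
  push_cast
  rfl

theorem ext [IsAddTorsionFree A] (hf : HasLogDeriv h f) (hg : HasLogDeriv h g)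
    (h_zero : PowerSeries.coeff 0 f = PowerSeries.coeff 0 g) : f = g := by
  refine PowerSeries.ext fun n => ?_
  induction n using Nat.strong_induction_on with
  | _ n ih =>
    cases n with
    | zero => exact h_zero
    | succ n =>
      refine nsmul_right_injective n.succ_ne_zero ?_
      simp only [hf.coeff_succ, hg.coeff_succ]
      refine Finset.sum_congr rfl fun p hp => ?_
      rw [ih p.2 (Nat.lt_succ_of_le (Finset.HasAntidiagonal.antidiagonal.snd_le hp))]

end HasLogDeriv

theorem one_sub_C_mul_X_mul_mk_pow (c : A) :
    (1 - PowerSeries.C c * PowerSeries.X) * PowerSeries.mk (fun n => c ^ n) = 1 := by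
  have h := congrArg (PowerSeries.rescale c) (PowerSeries.mk_one_mul_one_sub_eq_one A)
  simpa [PowerSeries.rescale_mk, mul_comm, PowerSeries.rescale_X] using h

theorem hasLogDeriv_mk_pow (c : A) :
    HasLogDeriv (PowerSeries.C c * PowerSeries.mk fun n => c ^ n)
      (PowerSeries.mk fun n => c ^ n) := by
  have h_inv := one_sub_C_mul_X_mul_mk_pow c
  have h_deriv := congrArg (PowerSeries.derivative A) h_inv
  simp only [Derivation.leibniz, map_sub, PowerSeries.derivative_one, PowerSeries.derivative_C,
    PowerSeries.derivative_X, smul_eq_mul] at h_deriv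
  rw [HasLogDeriv]
  linear_combination (PowerSeries.mk fun n => c ^ n) * h_deriv -
    PowerSeries.derivative A (PowerSeries.mk fun n => c ^ n) * h_inv

theorem hasLogDeriv_one_sub_C_mul_X (c : A) :
    HasLogDeriv (-(PowerSeries.C c * PowerSeries.mk fun n => c ^ n))
      (1 - PowerSeries.C c * PowerSeries.X) := by
  simp only [HasLogDeriv, Derivation.leibniz, map_sub, PowerSeries.derivative_one,
    PowerSeries.derivative_C, PowerSeries.derivative_X, smul_eq_mul]
  linear_combination PowerSeries.C c * one_sub_C_mul_X_mul_mk_pow c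

theorem mk_derivation_coeff_mul {R : Type*} [CommSemiring R] [Algebra R A] (d : Derivation R A A)
    (f g : A⟦X⟧) :
    PowerSeries.mk (fun n => d (PowerSeries.coeff n (f * g))) =
      f * PowerSeries.mk (fun n => d (PowerSeries.coeff n g)) +
        g * PowerSeries.mk (fun n => d (PowerSeries.coeff n f)) := by
  ext n
  rw [mul_comm g]
  simp only [PowerSeries.coeff_mk, PowerSeries.coeff_mul, map_add, map_sum, Derivation.leibniz,
    smul_eq_mul, Finset.sum_add_distrib, mul_comm (PowerSeries.coeff _ g)]

theorem derivative_mk_derivation_coeff {R : Type*} [CommSemiring R] [Algebra R A]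
    (d : Derivation R A A) (f : A⟦X⟧) :
    PowerSeries.derivative A (PowerSeries.mk fun n => d (PowerSeries.coeff n f)) =
      PowerSeries.mk fun n => d (PowerSeries.coeff n (PowerSeries.derivative A f)) := by
  ext n
  simp only [PowerSeries.coeff_derivative, PowerSeries.coeff_mk, Derivation.leibniz, map_add,
    Derivation.map_natCast, Derivation.map_one_eq_zero, smul_eq_mul]
  ring

/-- If `f = exp G` up to a constant factor, then `d f = (d G) * f`; here `g = d G`. -/
theorem HasLogDeriv.mk_derivation_coeff [IsAddTorsionFree A] {R : Type*} [CommSemiring R]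
    [Algebra R A] {f g h : A⟦X⟧} (hf : HasLogDeriv h f) (d : Derivation R A A)
    (hg : PowerSeries.mk (fun n => d (PowerSeries.coeff n h)) = PowerSeries.derivative A g)
    (hg_zero : PowerSeries.coeff 0 g = 0) (hf_zero : d (PowerSeries.coeff 0 f) = 0) :
    PowerSeries.mk (fun n => d (PowerSeries.coeff n f)) = g * f := by
  rw [← sub_eq_zero]
  refine HasLogDeriv.ext (h := h) ?_ ?_ ?_
  · rw [HasLogDeriv] at *
    rw [map_sub, derivative_mk_derivation_coeff, hf, mk_derivation_coeff_mul, hg,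
      Derivation.leibniz, hf, smul_eq_mul, smul_eq_mul]
    ring
  · simp [HasLogDeriv]
  · simp only [PowerSeries.coeff_zero_eq_constantCoeff] at hg_zero hf_zero
    simp [hg_zero, hf_zero]

/-- The normal-ordering factor `(1 - ax)(1 - sx) / ((1 - x)(1 - asx))`, expanded at `x = 0`. The
paper's factor is its value at `a = q`, `s = t⁻¹`, `x = q⁻¹ z / w`. -/
noncomputable def normalOrderingSeries (a s : A) : A⟦X⟧ :=
  (1 - PowerSeries.C a * PowerSeries.X) * (1 - PowerSeries.C s * PowerSeries.X) *
    (PowerSeries.mk (fun n => 1 ^ n) * PowerSeries.mk fun n => (a * s) ^ n)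

theorem hasLogDeriv_normalOrderingSeries (a s : A) :
    HasLogDeriv (PowerSeries.mk fun k => (1 - a ^ (k + 1)) * (1 - s ^ (k + 1)))
      (normalOrderingSeries a s) := by
  have h_prod := ((hasLogDeriv_one_sub_C_mul_X a).mul (hasLogDeriv_one_sub_C_mul_X s)).mul
    ((hasLogDeriv_mk_pow 1).mul (hasLogDeriv_mk_pow (a * s)))
  rw [normalOrderingSeries]
  convert h_prod using 1
  ext n
  simp only [map_add, map_neg, PowerSeries.coeff_C_mul, PowerSeries.coeff_mk]
  ring

theorem normalOrderingSeries_eq_one_add (a s : A) :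
    normalOrderingSeries a s = 1 + PowerSeries.C ((1 - a) * (1 - s)) * (PowerSeries.X *
      (PowerSeries.mk (fun n => (a * s) ^ n) * PowerSeries.mk fun n => 1 ^ n)) := by
  have h_one := one_sub_C_mul_X_mul_mk_pow (1 : A)
  have h_mul := one_sub_C_mul_X_mul_mk_pow (a * s)
  simp only [normalOrderingSeries, map_mul, map_sub, map_one] at *
  linear_combination
    (1 - PowerSeries.C a * PowerSeries.C s * PowerSeries.X) *
      (PowerSeries.mk fun n => (a * s) ^ n) * h_one + h_mul

theorem coeff_normalOrderingSeries (a s : A) (n : ℕ) :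
    PowerSeries.coeff n (normalOrderingSeries a s) =
      (if n = 0 then 1 else 0) + (1 - a) * (1 - s) * ∑ k ∈ Finset.range n, (a * s) ^ k := by
  rw [normalOrderingSeries_eq_one_add, map_add, PowerSeries.coeff_one, PowerSeries.coeff_C_mul]
  cases n with
  | zero => simp
  | succ n =>
    rw [PowerSeries.coeff_succ_X_mul, PowerSeries.coeff_mul,
      Finset.Nat.sum_antidiagonal_eq_sum_range_succ_mk]
    simp

end LogDerivative

section Perp

variable {K : Type*} [Field K]

theorem pperp_X_mul (k i : ℕ+) (f : MvPolynomial ℕ+ K) :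
    pperp k (X i * f) = X i * pperp k f + pperp k (X i) * f := by
  simp only [pperp, LinearMap.smul_apply, Derivation.coeFn_coe, pderiv_mul, smul_add,
    smul_mul_assoc, mul_smul_comm]
  exact add_comm _ _

theorem pperp_X (k i : ℕ+) :
    pperp k (X i : MvPolynomial ℕ+ K) = C (if k = i then ((i : ℕ) : K) else 0) := by
  by_cases h : k = i
  · subst h
    simp [pperp, smul_eq_C_mul]
  · simp [pperp, h, pderiv_X_of_ne (Ne.symm h)]

theorem pperp_C (k : ℕ+) (c : K) : pperp k (C c) = 0 := by
  simp [pperp]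

theorem pperp_comm (k l : ℕ+) (f : MvPolynomial ℕ+ K) :
    pperp k (pperp l f) = pperp l (pperp k f) := by
  have h_pderiv : ⁅pderiv (R := K) k, pderiv (R := K) l⁆ = 0 := by
    refine derivation_ext fun i => ?_
    simp [Derivation.commutator_apply, pderiv_X, Pi.single_apply, apply_ite]
  have h_apply : pderiv k (pderiv l f) = pderiv l (pderiv k f) :=
    sub_eq_zero.1 ((Derivation.commutator_apply f).symm.trans (DFunLike.congr_fun h_pderiv f))
  simp only [pperp, LinearMap.smul_apply, Derivation.coeFn_coe, map_smul, h_apply]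
  exact smul_comm _ _ _

open scoped IsMulCommutative in
/-- The algebra map `g ↦ g^⊥` sending a symmetric function to the adjoint of multiplication by it;
it is determined by `p_m ↦ p_m^⊥`, because these operators commute. -/
noncomputable def perpHom : MvPolynomial ℕ+ K →ₐ[K] Module.End K (MvPolynomial ℕ+ K) :=
  have : IsMulCommutative (Algebra.adjoin K (Set.range (pperp (F := K)))) :=
    Algebra.isMulCommutative_adjoin K <| by
      rintro _ ⟨k, rfl⟩ _ ⟨l, rfl⟩
      exact LinearMap.ext (pperp_comm k l)
  (Algebra.adjoin K (Set.range (pperp (F := K)))).val.comp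
    (aeval fun m => (⟨pperp m, Algebra.subset_adjoin ⟨m, rfl⟩⟩ :
      Algebra.adjoin K (Set.range (pperp (F := K)))))

theorem perpHom_X (m : ℕ+) : perpHom (X m : MvPolynomial ℕ+ K) = pperp m := by
  simp [perpHom]

theorem QstarOp_eq_perpHom (a : K) (n : ℕ) : QstarOp a n = perpHom (Qcoef a n) := by
  induction n using Nat.strong_induction_on with
  | _ n ih =>
    cases n with
    | zero => rw [QstarOp, Qcoef, map_one]; rfl
    | succ n =>
      rw [QstarOp, Qcoef, C_mul', map_smul, map_sum]
      congr 1
      refine Finset.sum_congr rfl fun k _ => ?_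
      rw [mul_assoc, C_mul', map_smul, map_mul, perpHom_X, ih (n - k) (by omega)]
      rfl

theorem QstarOp_comm (a b : K) (m n : ℕ) (f : MvPolynomial ℕ+ K) :
    QstarOp a m (QstarOp b n f) = QstarOp b n (QstarOp a m f) := by
  simp only [QstarOp_eq_perpHom, ← Module.End.mul_apply, ← map_mul, mul_comm]

theorem QstarOp_succ_C (a c : K) (n : ℕ) : QstarOp a (n + 1) (C c) = 0 := by
  rw [QstarOp]
  simp only [LinearMap.smul_apply, LinearMap.sum_apply, LinearMap.comp_apply,
    QstarOp_eq_perpHom a (_ - _), ← perpHom_X, ← Module.End.mul_apply, ← map_mul, mul_comm (X _)]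
  simp [perpHom_X, pperp_C]

theorem perpHom_X_mul (g : MvPolynomial ℕ+ K) (i : ℕ+) (f : MvPolynomial ℕ+ K) :
    perpHom g (X i * f) = X i * perpHom g f + perpHom (pperp i g) f := by
  induction g using MvPolynomial.induction_on generalizing f with
  | C c => simp [pperp_C]
  | add g₁ g₂ h₁ h₂ =>
    simp only [map_add, LinearMap.add_apply, h₁, h₂, mul_add]
    abel
  | mul_X g k h =>
    have h_delta : perpHom (pperp i (X k) * g) f = perpHom g (pperp k (X i) * f) := by
      by_cases hik : i = k
      · subst hik
        rw [pperp_X, C_mul', C_mul', map_smul, map_smul, LinearMap.smul_apply]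
      · simp [pperp_X, hik, Ne.symm hik]
    have h_mul (g f : MvPolynomial ℕ+ K) : perpHom (g * X k) f = perpHom g (pperp k f) := by
      rw [map_mul perpHom, perpHom_X, Module.End.mul_apply]
    rw [h_mul, h_mul, pperp_X_mul, map_add, h, mul_comm g, pperp_X_mul, map_add perpHom,
      LinearMap.add_apply, h_delta, mul_comm (X k), h_mul, add_assoc]

/-- The algebra map `f ↦ Q*(w) f`, which translates each `p_k` by `(1 - a^k) w^k`. -/
noncomputable def translateHom (a : K) :
    MvPolynomial ℕ+ K →ₐ[K] Polynomial (MvPolynomial ℕ+ K) :=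
  aeval fun k : ℕ+ =>
    Polynomial.C (X k) + Polynomial.C (C (1 - a ^ (k : ℕ))) * Polynomial.X ^ (k : ℕ)

theorem translateHom_C (a c : K) : translateHom a (C c) = Polynomial.C (C c) :=
  (translateHom a).commutes c

theorem translateHom_X (a : K) (k : ℕ+) : translateHom a (X k) =
    Polynomial.C (X k) + Polynomial.C (C (1 - a ^ (k : ℕ))) * Polynomial.X ^ (k : ℕ) :=
  aeval_X _ k

theorem Jop_apply (q t : K) (M : ℕ) (f : MvPolynomial ℕ+ K) :
    Jop q t M f = ∑ n ∈ Finset.range (M + 1), q⁻¹ ^ n • (Qcoef t n * QstarOp q n f) := by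
  simp [Jop, mulOp, LinearMap.sum_apply]

/-- The symmetric functions of weighted degree at most `M - n`, and only `0` if `M < n`. -/
noncomputable def weightLE (K : Type*) [Field K] (M n : ℕ) : Submodule K (MvPolynomial ℕ+ K) :=
  restrictSupport K {s | Finsupp.weight (fun m : ℕ+ => (m : ℕ)) s + n ≤ M}

theorem mem_weightLE {M n : ℕ} {f : MvPolynomial ℕ+ K} :
    f ∈ weightLE K M n ↔
      ∀ s, coeff s f ≠ 0 → Finsupp.weight (fun m : ℕ+ => (m : ℕ)) s + n ≤ M := by
  simp only [weightLE, mem_restrictSupport_iff, Set.subset_def, Finset.mem_coe, mem_support_iff,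
    Set.mem_ofPred_eq]

theorem pperp_mem_weightLE {M n : ℕ} {f : MvPolynomial ℕ+ K} (k : ℕ+) (hf : f ∈ weightLE K M n) :
    pperp k f ∈ weightLE K M (n + k) := by
  rw [mem_weightLE] at *
  intro s hs
  simp only [pperp, LinearMap.smul_apply, Derivation.coeFn_coe, coeff_smul, coeff_pderiv] at hs
  have h_shift := hf (s + Finsupp.single k 1) fun h => hs (by rw [h, zero_mul, smul_zero])
  rw [map_add, Finsupp.weight_single, one_smul] at h_shift
  omega

theorem QstarOp_mem_weightLE {M n : ℕ} {f : MvPolynomial ℕ+ K} (a : K) (m : ℕ)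
    (hf : f ∈ weightLE K M n) : QstarOp a m f ∈ weightLE K M (n + m) := by
  induction m using Nat.strong_induction_on with
  | _ m ih =>
    cases m with
    | zero =>
      rw [QstarOp]
      exact hf
    | succ m =>
      rw [QstarOp, LinearMap.smul_apply, LinearMap.sum_apply]
      refine Submodule.smul_mem _ _ (Submodule.sum_mem _ fun k hk => Submodule.smul_mem _ _ ?_)
      have h_sum : n + (m - k) + k.succPNat = n + (m + 1) := by
        have := Finset.mem_range.1 hk
        simp only [Nat.succPNat_coe]
        omega
      rw [← h_sum]
      exact pperp_mem_weightLE _ (ih (m - k) (by omega))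

theorem QstarOp_QstarOp_eq_zero {M m n : ℕ} {f : MvPolynomial ℕ+ K} (a b : K) (hf : wdeg f ≤ M)
    (h_lt : M < m + n) : QstarOp a m (QstarOp b n f) = 0 := by
  have h_mem : f ∈ weightLE K M 0 :=
    mem_weightLE.2 fun s hs => (le_weightedTotalDegree _ (mem_support_iff.2 hs)).trans hf
  have h_image := mem_weightLE.1 (QstarOp_mem_weightLE a m (QstarOp_mem_weightLE b n h_mem))
  ext s
  by_contra hs
  have := h_image s hs
  omega

end Perp

section QSeries

open Finset.HasAntidiagonal
open scoped PowerSeries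

/-- The generating series `Q(z) = ∑ Q_n z^n`. -/
noncomputable def Qseries (s : F) : (MvPolynomial ℕ+ F)⟦X⟧ :=
  PowerSeries.mk (Qcoef s)

/-- The logarithmic derivative `∑_{k ≥ 0} (1 - s^{k+1}) p_{k+1} z^k` of `Q(z)`. -/
noncomputable def QlogDeriv (s : F) : (MvPolynomial ℕ+ F)⟦X⟧ :=
  PowerSeries.mk fun k => C (1 - s ^ (k + 1)) * X k.succPNat

theorem hasLogDeriv_Qseries (s : F) : HasLogDeriv (QlogDeriv s) (Qseries s) := by
  refine PowerSeries.ext fun n => ?_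
  have h_cast : (n : MvPolynomial ℕ+ F) + 1 = C ((n : F) + 1) := by simp
  rw [PowerSeries.coeff_derivative, PowerSeries.coeff_mul, Qseries, PowerSeries.coeff_mk, Qcoef,
    Finset.Nat.sum_antidiagonal_eq_sum_range_succ_mk, h_cast, mul_right_comm, ← C_mul,
    inv_mul_cancel₀ (Nat.cast_add_one_ne_zero n), C_1, one_mul]
  simp only [QlogDeriv, PowerSeries.coeff_mk]

theorem Qseries_mul_rescale_Qseries_inv {t : F} (ht : t ≠ 0) :
    Qseries t * PowerSeries.rescale (C t) (Qseries t⁻¹) = 1 := by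
  have h_cancel : QlogDeriv t +
      PowerSeries.C (C t) * PowerSeries.rescale (C t) (QlogDeriv t⁻¹) = 0 := by
    refine PowerSeries.ext fun n => ?_
    have h_pow : (1 - t ^ (n + 1)) + t * (t ^ n * (1 - t⁻¹ ^ (n + 1))) = 0 := by
      rw [inv_pow, ← mul_assoc, ← pow_succ', mul_sub, mul_inv_cancel₀ (pow_ne_zero _ ht)]
      ring
    rw [map_add, PowerSeries.coeff_C_mul, PowerSeries.coeff_rescale, QlogDeriv, QlogDeriv,
      PowerSeries.coeff_mk, PowerSeries.coeff_mk, ← C_pow, ← mul_assoc, ← mul_assoc, ← C_mul,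
      ← C_mul, ← add_mul, ← C_add, mul_assoc, h_pow, C_0, zero_mul, map_zero]
  refine HasLogDeriv.ext (h := 0) ?_ ?_ ?_
  · rw [← h_cancel]
    exact (hasLogDeriv_Qseries t).mul ((hasLogDeriv_Qseries t⁻¹).rescale (C t))
  · rw [HasLogDeriv, PowerSeries.derivative_one, zero_mul]
  · simp [PowerSeries.coeff_mul, Qseries, Qcoef]

theorem sum_antidiagonal_pow_smul_Qcoef_mul_Qcoef_inv {t : F} (ht : t ≠ 0) {N : ℕ} (hN : N ≠ 0) :
    ∑ p ∈ antidiagonal N, t ^ p.2 • (Qcoef t p.1 * Qcoef t⁻¹ p.2) = 0 := by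
  have h := congrArg (PowerSeries.coeff N) (Qseries_mul_rescale_Qseries_inv ht)
  rw [PowerSeries.coeff_mul, PowerSeries.coeff_one, if_neg hN] at h
  simpa only [Qseries, PowerSeries.coeff_mk, PowerSeries.coeff_rescale, ← C_pow, smul_eq_C_mul,
    mul_left_comm] using h

theorem sum_antidiagonal_pow_smul_QstarOp_QstarOp_inv {q : F} (hq : q ≠ 0) {N : ℕ} (hN : N ≠ 0)
    (f : MvPolynomial ℕ+ F) :
    ∑ p ∈ antidiagonal N, q ^ p.2 • QstarOp q p.1 (QstarOp q⁻¹ p.2 f) = 0 := by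
  have h := congrArg (fun g => perpHom g f) (sum_antidiagonal_pow_smul_Qcoef_mul_Qcoef_inv hq hN)
  simpa only [map_sum, map_smul, map_mul, map_zero, LinearMap.sum_apply, LinearMap.smul_apply,
    Module.End.mul_apply, LinearMap.zero_apply, ← QstarOp_eq_perpHom] using h

theorem mk_pperp_coeff_Qseries (s : F) (i : ℕ+) :
    PowerSeries.mk (fun n => pperp i (PowerSeries.coeff n (Qseries s))) =
      PowerSeries.C (C (1 - s ^ (i : ℕ))) * PowerSeries.X ^ (i : ℕ) * Qseries s := by
  have h_pperp (g : MvPolynomial ℕ+ F) : pperp i g = (((i : ℕ) : F) • pderiv i) g := rfl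
  have h_logDeriv : PowerSeries.mk (fun k => pperp i (PowerSeries.coeff k (QlogDeriv s))) =
      PowerSeries.derivative _ (PowerSeries.C (C (1 - s ^ (i : ℕ))) * PowerSeries.X ^ (i : ℕ)) := by
    refine PowerSeries.ext fun k => ?_
    rw [PowerSeries.coeff_derivative, PowerSeries.coeff_C_mul, PowerSeries.coeff_X_pow,
      PowerSeries.coeff_mk, QlogDeriv, PowerSeries.coeff_mk, C_mul', map_smul, pperp_X,
      smul_eq_C_mul]
    by_cases hik : i = k.succPNat
    · simp [hik, mul_add]
    · have h_ne : k + 1 ≠ (i : ℕ) := fun h => hik (PNat.eq h.symm)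
      simp [hik, h_ne]
  simp only [h_pperp] at h_logDeriv ⊢
  refine (hasLogDeriv_Qseries s).mk_derivation_coeff _ h_logDeriv ?_ ?_
  · simp [PowerSeries.coeff_zero_eq_constantCoeff]
  · simp [Qseries, Qcoef]

theorem pperp_Qcoef (s : F) (i : ℕ+) (n : ℕ) :
    pperp i (Qcoef s n) =
      if (i : ℕ) ≤ n then C (1 - s ^ (i : ℕ)) * Qcoef s (n - i) else 0 := by
  have h := congrArg (PowerSeries.coeff n) (mk_pperp_coeff_Qseries s i)
  simpa only [Qseries, PowerSeries.coeff_mk, mul_assoc, PowerSeries.coeff_C_mul,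
    PowerSeries.coeff_X_pow_mul', mul_ite, mul_zero] using h

theorem QstarOp_X_mul (a : F) (n : ℕ) (i : ℕ+) (f : MvPolynomial ℕ+ F) :
    QstarOp a n (X i * f) = X i * QstarOp a n f +
      if (i : ℕ) ≤ n then C (1 - a ^ (i : ℕ)) * QstarOp a (n - i) f else 0 := by
  rw [QstarOp_eq_perpHom, perpHom_X_mul, pperp_Qcoef]
  split_ifs
  · rw [C_mul', map_smul, LinearMap.smul_apply, QstarOp_eq_perpHom, C_mul']
  · rw [map_zero, LinearMap.zero_apply]

theorem coeff_translateHom (a : F) (n : ℕ) (f : MvPolynomial ℕ+ F) :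
    (translateHom a f).coeff n = QstarOp a n f := by
  induction f using MvPolynomial.induction_on generalizing n with
  | C c =>
    rw [translateHom_C]
    cases n with
    | zero => simp [QstarOp]
    | succ n => rw [Polynomial.coeff_C_succ, QstarOp_succ_C]
  | add f g hf hg => rw [map_add, Polynomial.coeff_add, hf, hg, map_add]
  | mul_X f i hf =>
    rw [mul_comm f, QstarOp_X_mul, map_mul, translateHom_X, add_mul,
      Polynomial.coeff_add, Polynomial.coeff_C_mul, hf, mul_assoc, Polynomial.coeff_C_mul,
      Polynomial.coeff_X_pow_mul', mul_ite, mul_zero, hf]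

theorem map_translateHom_Qseries (a s : F) :
    PowerSeries.map (translateHom a).toRingHom (Qseries s) =
      PowerSeries.map Polynomial.C (Qseries s) *
        PowerSeries.rescale Polynomial.X
          (PowerSeries.map (algebraMap F _) (normalOrderingSeries a s)) := by
  have h_algebraMap (c : F) : algebraMap F (Polynomial (MvPolynomial ℕ+ F)) c =
      Polynomial.C (C c) := rfl
  have h_logDeriv : PowerSeries.map (translateHom a).toRingHom (QlogDeriv s) =
      PowerSeries.map Polynomial.C (QlogDeriv s) + PowerSeries.C Polynomial.X *
        PowerSeries.rescale Polynomial.X (PowerSeries.map (algebraMap F _)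
          (PowerSeries.mk fun k => (1 - a ^ (k + 1)) * (1 - s ^ (k + 1)))) := by
    refine PowerSeries.ext fun n => ?_
    simp only [QlogDeriv, map_add, PowerSeries.coeff_map, PowerSeries.coeff_mk,
      PowerSeries.coeff_C_mul, PowerSeries.coeff_rescale, AlgHom.toRingHom_eq_coe,
      RingHom.coe_coe, map_mul, translateHom_C, translateHom_X, Nat.succPNat_coe,
      Nat.succ_eq_add_one, h_algebraMap]
    ring
  refine HasLogDeriv.ext ((hasLogDeriv_Qseries s).map _) ?_ ?_
  · rw [h_logDeriv]
    exact ((hasLogDeriv_Qseries s).map _).mul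
      (((hasLogDeriv_normalOrderingSeries a s).map _).rescale _)
  · simp [PowerSeries.coeff_mul, Qseries, Qcoef, normalOrderingSeries]

theorem QstarOp_Qcoef_mul (a s : F) (m n : ℕ) (f : MvPolynomial ℕ+ F) :
    QstarOp a m (Qcoef s n * f) = ∑ j ∈ Finset.range (n + 1),
      if j ≤ m then PowerSeries.coeff j (normalOrderingSeries a s) •
        (Qcoef s (n - j) * QstarOp a (m - j) f) else 0 := by
  have h := congrArg (PowerSeries.coeff n) (map_translateHom_Qseries a s)
  rw [PowerSeries.coeff_map, mul_comm, PowerSeries.coeff_mul,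
    Finset.Nat.sum_antidiagonal_eq_sum_range_succ_mk] at h
  simp only [Qseries, PowerSeries.coeff_map, PowerSeries.coeff_mk, PowerSeries.coeff_rescale,
    AlgHom.toRingHom_eq_coe, RingHom.coe_coe] at h
  rw [← coeff_translateHom, map_mul, h, Finset.sum_mul, Polynomial.finsetSum_coeff]
  refine Finset.sum_congr rfl fun j _ => ?_
  rw [mul_assoc, mul_assoc, Polynomial.coeff_X_pow_mul', ← Algebra.smul_def,
    Polynomial.coeff_smul, Polynomial.coeff_C_mul, coeff_translateHom]

end QSeries

section Residue

variable {K A : Type*} [Field K] [AddCommGroup A] [Module K A]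

theorem geom_sum_range_add (x : K) (d i : ℕ) : ∑ k ∈ Finset.range (d + i), x ^ k =
    ∑ k ∈ Finset.range d, x ^ k + x ^ d * ∑ k ∈ Finset.range i, x ^ k := by
  rw [Finset.sum_range_add, Finset.mul_sum]
  simp only [pow_add]

theorem inv_mul_geom_sum_inv {x : K} (hx : x ≠ 0) (d : ℕ) :
    x⁻¹ * ∑ k ∈ Finset.range d, x⁻¹ ^ k = x⁻¹ ^ d * ∑ k ∈ Finset.range d, x ^ k := by
  rw [← Finset.sum_range_reflect, Finset.mul_sum, Finset.mul_sum]
  refine Finset.sum_congr rfl fun k hk => ?_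
  have h_exp : d = d - 1 - k + 1 + k := by
    have := Finset.mem_range.1 hk
    omega
  conv_rhs => rw [h_exp]
  rw [pow_add _ _ k, mul_assoc, ← mul_pow, inv_mul_cancel₀ hx, one_pow, mul_one, pow_succ']

/-- The coefficient in degree `m - i` of the difference of the two expansions of the normal-ordering
factor, at `0` and at `∞`. With `x = q / t` it equals `(1 - q)(1 - t⁻¹)(1 - x^{m-i}) / (1 - x)`,
here without division by `1 - x` and with the dependence on `m` and `i` separated. -/
def residueCoeff (q t : K) (m i : ℕ) : K :=
  (1 - q) * (1 - t⁻¹) * (∑ k ∈ Finset.range m, (q * t⁻¹) ^ k -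
    (q * t⁻¹) ^ m * ((q * t⁻¹)⁻¹ ^ i * ∑ k ∈ Finset.range i, (q * t⁻¹) ^ k))

variable {q t : K}

theorem coeff_normalOrderingSeries_eq_add_residueCoeff (hq : q ≠ 0) (ht : t ≠ 0) (i d : ℕ) :
    PowerSeries.coeff d (normalOrderingSeries q t⁻¹) =
      (if d = 0 then 1 else 0) + residueCoeff q t (i + d) i := by
  have h_pow : (q * t⁻¹) ^ i * (q * t⁻¹)⁻¹ ^ i = 1 := by
    rw [← mul_pow, mul_inv_cancel₀ (mul_ne_zero hq (inv_ne_zero ht)), one_pow]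
  rw [coeff_normalOrderingSeries, residueCoeff, add_comm i, geom_sum_range_add, pow_add]
  linear_combination (1 - q) * (1 - t⁻¹) * (q * t⁻¹) ^ d *
    (∑ k ∈ Finset.range i, (q * t⁻¹) ^ k) * h_pow

theorem coeff_normalOrderingSeries_inv_eq_sub_residueCoeff (hq : q ≠ 0) (ht : t ≠ 0) (m d : ℕ) :
    PowerSeries.coeff d (normalOrderingSeries q⁻¹ t) =
      (if d = 0 then 1 else 0) - residueCoeff q t m (m + d) := by
  have hx : q * t⁻¹ ≠ 0 := mul_ne_zero hq (inv_ne_zero ht)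
  have h_pow (n : ℕ) : (q * t⁻¹) ^ n * (q * t⁻¹)⁻¹ ^ n = 1 := by
    rw [← mul_pow, mul_inv_cancel₀ hx, one_pow]
  have h_factor : (1 - q⁻¹) * (1 - t) = (1 - q) * (1 - t⁻¹) * (q * t⁻¹)⁻¹ := by
    field_simp
    ring
  have h_residue : residueCoeff q t m (m + d) = -((1 - q) * (1 - t⁻¹) *
      ((q * t⁻¹)⁻¹ ^ d * ∑ k ∈ Finset.range d, (q * t⁻¹) ^ k)) := by
    rw [residueCoeff, add_comm m, geom_sum_range_add, pow_add]
    linear_combination (1 - q) * (1 - t⁻¹) * (-(∑ k ∈ Finset.range m, (q * t⁻¹) ^ k) * h_pow d -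
      ((q * t⁻¹)⁻¹ ^ d * (∑ k ∈ Finset.range d, (q * t⁻¹) ^ k) + (q * t⁻¹) ^ d *
        (q * t⁻¹)⁻¹ ^ d * ∑ k ∈ Finset.range m, (q * t⁻¹) ^ k) * h_pow m)
  rw [coeff_normalOrderingSeries, h_residue, h_factor, mul_assoc _ (q * t⁻¹)⁻¹,
    show q⁻¹ * t = (q * t⁻¹)⁻¹ by rw [mul_inv, inv_inv], inv_mul_geom_sum_inv hx, sub_neg_eq_add]

theorem sum_coeff_normalOrderingSeries_sub (hq : q ≠ 0) (ht : t ≠ 0) (α : ℕ → A) (i n : ℕ) :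
    ∑ d ∈ Finset.range (n + 1), PowerSeries.coeff d (normalOrderingSeries q t⁻¹) • α (i + d) -
      ∑ d ∈ Finset.range (i + 1), PowerSeries.coeff d (normalOrderingSeries q⁻¹ t) • α (i - d) =
    ∑ m ∈ Finset.range (i + n + 1), residueCoeff q t m i • α m := by
  have h_first : ∑ d ∈ Finset.range (n + 1),
      PowerSeries.coeff d (normalOrderingSeries q t⁻¹) • α (i + d) =
        α i + ∑ d ∈ Finset.range (n + 1), residueCoeff q t (i + d) i • α (i + d) := by
    simp [coeff_normalOrderingSeries_eq_add_residueCoeff hq ht i, add_smul,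
      Finset.sum_add_distrib, ite_smul]
  have h_second : ∑ d ∈ Finset.range (i + 1),
      PowerSeries.coeff d (normalOrderingSeries q⁻¹ t) • α (i - d) =
        α i - ∑ m ∈ Finset.range i, residueCoeff q t m i • α m := by
    have h_coeff {m : ℕ} (hm : m < i + 1) :
        PowerSeries.coeff (i - m) (normalOrderingSeries q⁻¹ t) =
          (if m = i then 1 else 0) - residueCoeff q t m i := by
      have h := coeff_normalOrderingSeries_inv_eq_sub_residueCoeff hq ht m (i - m)
      rw [Nat.add_sub_of_le (Nat.le_of_lt_succ hm)] at h
      rw [h]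
      exact congrArg (· - _) (if_congr (by omega) rfl rfl)
    have h_diag : residueCoeff q t i i = 0 := by
      have h := coeff_normalOrderingSeries_eq_add_residueCoeff hq ht i 0
      rw [coeff_normalOrderingSeries] at h
      simpa using h
    rw [← Finset.sum_range_reflect, Finset.sum_congr rfl fun m hm => by
      rw [Nat.add_sub_cancel, h_coeff (Finset.mem_range.1 hm),
        Nat.sub_sub_self (Nat.le_of_lt_succ (Finset.mem_range.1 hm))]]
    simp [sub_smul, ite_smul, Finset.sum_range_succ, h_diag]
  rw [h_first, h_second, add_assoc i n 1,
    Finset.sum_range_add (fun m => residueCoeff q t m i • α m) i (n + 1)]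
  abel

end Residue

section Composition

open Finset.HasAntidiagonal

theorem sum_range_ite_sub_eq {A : Type*} [AddCommMonoid A] {c : ℕ → A} {K L j : ℕ}
    (hc : ∀ i, K ≤ i → c i = 0) (h_le : K + j ≤ L) :
    ∑ m ∈ Finset.range L, (if j ≤ m then c (m - j) else 0) = ∑ i ∈ Finset.range K, c i := by
  obtain ⟨r, rfl⟩ := Nat.exists_eq_add_of_le' ((Nat.le_add_left j K).trans h_le)
  rw [add_comm r, Finset.sum_range_add, Finset.sum_eq_zero, zero_add]
  · simp only [le_add_iff_nonneg_right, zero_le, if_true, Nat.add_sub_cancel_left]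
    refine (Finset.sum_subset (Finset.range_mono (by omega)) fun i _ hi => ?_).symm
    exact hc i (not_lt.1 (mt Finset.mem_range.2 hi))
  · exact fun m hm => if_neg (not_le.2 (Finset.mem_range.1 hm))

/-- The symmetric function multiplying `Q*_i[q] Q*_n[q']` in the normally ordered form of
`(∑ q^{-m} Q_m[t] Q*_m[q]) (∑ q'^{-n} Q_n[t'] Q*_n[q'])`. -/
noncomputable def pairKernel (q t q' t' : F) (i n : ℕ) : MvPolynomial ℕ+ F :=
  ∑ j ∈ Finset.range (n + 1),
    (q⁻¹ ^ (i + j) * q'⁻¹ ^ n * PowerSeries.coeff j (normalOrderingSeries q t')) •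
      (Qcoef t (i + j) * Qcoef t' (n - j))

theorem Jop_Jop (q t q' t' : F) {M : ℕ} {f : MvPolynomial ℕ+ F} (hf : wdeg f ≤ M) :
    Jop q t M (Jop q' t' M f) = ∑ N ∈ Finset.range (M + 1), ∑ p ∈ antidiagonal N,
      pairKernel q t q' t' p.1 p.2 * QstarOp q p.1 (QstarOp q' p.2 f) := by
  let term (n j i : ℕ) : MvPolynomial ℕ+ F :=
    ((q⁻¹ ^ (i + j) * q'⁻¹ ^ n * PowerSeries.coeff j (normalOrderingSeries q t')) •
      (Qcoef t (i + j) * Qcoef t' (n - j))) * QstarOp q i (QstarOp q' n f)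
  have h_term {m n j : ℕ} (h : j ≤ m) : q'⁻¹ ^ n • q⁻¹ ^ m • (Qcoef t m *
      PowerSeries.coeff j (normalOrderingSeries q t') •
        (Qcoef t' (n - j) * QstarOp q (m - j) (QstarOp q' n f))) = term n j (m - j) := by
    simp only [term, Nat.sub_add_cancel h, smul_eq_C_mul, C_mul]
    ring
  have h_zero (n j i : ℕ) (h : M + 1 - n ≤ i) : term n j i = 0 := by
    simp only [term, QstarOp_QstarOp_eq_zero q q' hf (show M < i + n by omega), mul_zero]
  calc Jop q t M (Jop q' t' M f)
    _ = ∑ n ∈ Finset.range (M + 1), ∑ m ∈ Finset.range (M + 1), ∑ j ∈ Finset.range (n + 1),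
          if j ≤ m then term n j (m - j) else 0 := by
      simp only [Jop_apply, map_sum, map_smul, QstarOp_Qcoef_mul, Finset.mul_sum, Finset.smul_sum]
      refine Finset.sum_congr rfl fun n _ => Finset.sum_congr rfl fun m _ =>
        Finset.sum_congr rfl fun j _ => ?_
      split_ifs with h
      · exact h_term h
      · simp only [smul_zero, mul_zero]
    _ = ∑ n ∈ Finset.range (M + 1), ∑ j ∈ Finset.range (n + 1),
          ∑ i ∈ Finset.range (M + 1 - n), term n j i := by
      refine Finset.sum_congr rfl fun n hn => ?_
      rw [Finset.sum_comm]
      refine Finset.sum_congr rfl fun j hj => sum_range_ite_sub_eq (h_zero n j) ?_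
      have := Finset.mem_range.1 hn
      have := Finset.mem_range.1 hj
      omega
    _ = ∑ n ∈ Finset.range (M + 1), ∑ i ∈ Finset.range (M + 1 - n),
          pairKernel q t q' t' i n * QstarOp q i (QstarOp q' n f) := by
      refine Finset.sum_congr rfl fun n _ => ?_
      rw [Finset.sum_comm]
      simp only [pairKernel, Finset.sum_mul, term]
    _ = _ := by
      rw [← Finset.sum_range_diag_flip]
      refine Finset.sum_congr rfl fun N _ => ?_
      rw [← Finset.Nat.sum_antidiagonal_swap, Finset.Nat.sum_antidiagonal_eq_sum_range_succ_mk]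
      rfl

/-- The symmetric function `E_N` for which the two orders of composition have kernels differing
by `q^n E_{i+n}`. -/
noncomputable def commutatorKernel {K : Type*} [Field K] (q t : K) (N : ℕ) : MvPolynomial ℕ+ K :=
  ∑ p ∈ antidiagonal N, ((1 - q) * (1 - t⁻¹) * (∑ k ∈ Finset.range p.1, (q * t⁻¹) ^ k) *
    q⁻¹ ^ p.1) • (Qcoef t p.1 * Qcoef t⁻¹ p.2)

theorem commutatorKernel_zero {K : Type*} [Field K] (q t : K) : commutatorKernel q t 0 = 0 := by
  simp [commutatorKernel]

theorem sum_residueCoeff_smul_Qcoef_mul_Qcoef_inv {q t : F} (hq : q ≠ 0) (ht : t ≠ 0)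
    {i N : ℕ} (hi : i ≤ N) :
    ∑ p ∈ antidiagonal N, residueCoeff q t p.1 i • q⁻¹ ^ p.1 • (Qcoef t p.1 * Qcoef t⁻¹ p.2) =
      commutatorKernel q t N := by
  rcases eq_or_ne N 0 with rfl | hN
  · obtain rfl := Nat.le_zero.1 hi
    simp [residueCoeff, commutatorKernel]
  have h_pow {p : ℕ × ℕ} (hp : p ∈ antidiagonal N) :
      (q * t⁻¹) ^ p.1 * q⁻¹ ^ p.1 = t⁻¹ ^ N * t ^ p.2 := by
    rw [← mul_pow, mul_right_comm, mul_inv_cancel₀ hq, one_mul, ← mem_antidiagonal.1 hp, pow_add,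
      mul_assoc, ← mul_pow, inv_mul_cancel₀ ht, one_pow, mul_one]
  let c : F := (1 - q) * (1 - t⁻¹) * ((q * t⁻¹)⁻¹ ^ i * ∑ k ∈ Finset.range i, (q * t⁻¹) ^ k)
  calc
    _ = commutatorKernel q t N - (c * t⁻¹ ^ N) •
          ∑ p ∈ antidiagonal N, t ^ p.2 • (Qcoef t p.1 * Qcoef t⁻¹ p.2) := by
      rw [commutatorKernel, Finset.smul_sum, ← Finset.sum_sub_distrib]
      refine Finset.sum_congr rfl fun p hp => ?_
      rw [smul_smul, smul_smul, ← sub_smul, residueCoeff]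
      congr 1
      linear_combination (-c) * h_pow hp
    _ = commutatorKernel q t N := by
      rw [sum_antidiagonal_pow_smul_Qcoef_mul_Qcoef_inv ht hN, smul_zero, sub_zero]

theorem pairKernel_inv_right (q t t' : F) (i n : ℕ) :
    pairKernel q t q⁻¹ t' i n = q ^ n • ∑ j ∈ Finset.range (n + 1),
      PowerSeries.coeff j (normalOrderingSeries q t') •
        q⁻¹ ^ (i + j) • (Qcoef t (i + j) * Qcoef t' (i + n - (i + j))) := by
  simp only [pairKernel, Finset.smul_sum, smul_smul, inv_inv, Nat.add_sub_add_left]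
  refine Finset.sum_congr rfl fun j _ => congrArg (· • _) ?_
  ring

theorem pairKernel_inv_left {q : F} (hq : q ≠ 0) (t t' : F) (i n : ℕ) :
    pairKernel q⁻¹ t' q t n i = q ^ n • ∑ j ∈ Finset.range (i + 1),
      PowerSeries.coeff j (normalOrderingSeries q⁻¹ t) •
        q⁻¹ ^ (i - j) • (Qcoef t (i - j) * Qcoef t' (i + n - (i - j))) := by
  rw [pairKernel, Finset.smul_sum]
  refine Finset.sum_congr rfl fun j hj => ?_
  have h_le : j ≤ i := Nat.le_of_lt_succ (Finset.mem_range.1 hj)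
  have h_pow : q⁻¹⁻¹ ^ (n + j) * q⁻¹ ^ i = q ^ n * q⁻¹ ^ (i - j) := by
    rw [inv_inv, inv_pow, inv_pow, pow_sub₀ q hq h_le, pow_add]
    field_simp
  rw [h_pow, smul_smul, smul_smul, mul_comm (Qcoef t' _), show i + n - (i - j) = n + j by omega]
  congr 1
  ring

theorem pairKernel_sub_pairKernel {q t : F} (hq : q ≠ 0) (ht : t ≠ 0) (i n : ℕ) :
    pairKernel q t q⁻¹ t⁻¹ i n - pairKernel q⁻¹ t⁻¹ q t n i =
      q ^ n • commutatorKernel q t (i + n) := by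
  rw [pairKernel_inv_right, pairKernel_inv_left hq, ← smul_sub,
    sum_coeff_normalOrderingSeries_sub hq ht
      (fun m => q⁻¹ ^ m • (Qcoef t m * Qcoef t⁻¹ (i + n - m))),
    ← sum_residueCoeff_smul_Qcoef_mul_Qcoef_inv hq ht (Nat.le_add_right i n),
    Finset.Nat.sum_antidiagonal_eq_sum_range_succ_mk]

end Composition

/-- `[J₀^{[1]}, J₀^{[-1]}] = 0` on `Λ`.  Since each term of
`1 + J₀^{[s]}` with `n` larger than the weighted degree annihilates a given
symmetric function, and the operators preserve the weighted degree, the claim is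
that the truncations commute on every `f` whose weighted degree is at most `M`
(and `[1 + J₀^{[1]}, 1 + J₀^{[-1]}] = [J₀^{[1]}, J₀^{[-1]}]`). -/
theorem J0_commute (q t : F) (hq : q ≠ 0) (ht : t ≠ 0) :
    ∀ f : MvPolynomial ℕ+ F, ∀ M : ℕ, wdeg f ≤ M →
      Jop q t M (Jop q⁻¹ t⁻¹ M f) = Jop q⁻¹ t⁻¹ M (Jop q t M f) := by
  intro f M hf
  rw [← sub_eq_zero, Jop_Jop q t _ _ hf, Jop_Jop q⁻¹ t⁻¹ _ _ hf, ← Finset.sum_sub_distrib]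
  refine Finset.sum_eq_zero fun N _ => ?_
  rw [← Finset.Nat.sum_antidiagonal_swap (f := fun p =>
    pairKernel q⁻¹ t⁻¹ q t p.1 p.2 * QstarOp q⁻¹ p.1 (QstarOp q p.2 f))]
  calc
    _ = commutatorKernel q t N * ∑ p ∈ Finset.HasAntidiagonal.antidiagonal N,
          q ^ p.2 • QstarOp q p.1 (QstarOp q⁻¹ p.2 f) := by
      rw [← Finset.sum_sub_distrib, Finset.mul_sum]
      refine Finset.sum_congr rfl fun p hp => ?_
      rw [Prod.fst_swap, Prod.snd_swap, QstarOp_comm q⁻¹, ← sub_mul,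
        pairKernel_sub_pairKernel hq ht, Finset.HasAntidiagonal.mem_antidiagonal.1 hp,
        smul_mul_assoc, mul_smul_comm]
    _ = 0 := by
      rcases eq_or_ne N 0 with rfl | hN
      · rw [commutatorKernel_zero, zero_mul]
      · rw [sum_antidiagonal_pow_smul_QstarOp_QstarOp_inv hq hN, mul_zero]
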